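/- arXiv:2511.15742 — 4 statements merged into one kernel-verified Lean document; each statement's English description precedes it below -/
import Mathlib

section
/- Let π be a permutation of Fin n such that c(π k) · q(π k') ≤ c(π k') · q(π k) whenever k ≤ k' (i.e., the ratios c/q are nondecreasing along π). Then for every permutation σ of Fin n, EC_∧(π) ≤ EC_∧(σ), where EC_∧(ρ) = Σ_{k=0}^{n-1} c(ρ k) · Π_{j=0}^{k-1} p(ρ j). That is, testing in nondecreasing order of c_i/q_i minimizes the expected cost of nonadaptively evaluating the series function. -/
/-!
The expected cost of a list of tests obeys `cost (a :: l) = c a + p a * cost l`. If `a` has the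
smaller ratio, i.e. `c a * (1 - p b) ≤ c b * (1 - p a)`, then swapping an adjacent pair `b, a` into
`a, b` does not increase the cost (`seriesCost_swap_le`). Hence a test of minimal ratio may be
bubbled to the front of any list (`seriesCost_move_front_le`), and induction on the ratio-ordered
list shows that it is at most as expensive as each of its rearrangements (`seriesCost_le_of_perm`).
The theorem is the case of the lists `List.ofFn π` and `List.ofFn σ`.
-/

/-- Expected cost of the nonadaptive strategy testing in order `ρ` for the series (AND)
function: `EC_∧(ρ) = ∑_{k=0}^{n-1} c (ρ k) · ∏_{j<k} p (ρ j)`. -/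
noncomputable def ECand {n : ℕ} (c p : Fin n → ℝ) (ρ : Equiv.Perm (Fin n)) : ℝ :=
  ∑ k : Fin n, c (ρ k) * ∏ j ∈ Finset.univ.filter (fun j => j < k), p (ρ j)

/-- Expected cost of evaluating the series function by performing the tests of a list in order:
the first test is always paid for, the remaining ones only if it succeeds. -/
noncomputable def seriesCost {α : Type*} (c p : α → ℝ) : List α → ℝ
  | [] => 0
  | a :: l => c a + p a * seriesCost c p l

lemma sum_mul_prod_eq_seriesCost {α : Type*} (c p : α → ℝ) {n : ℕ} (f : Fin n → α) :
    ∑ k : Fin n, c (f k) * ∏ j ∈ Finset.univ.filter (fun j => j < k), p (f j)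
      = seriesCost c p (List.ofFn f) := by
  induction n with
  | zero => simp [seriesCost]
  | succ n ih =>
    rw [List.ofFn_succ, seriesCost, ← ih (fun i => f i.succ), Fin.sum_univ_succ, Finset.mul_sum]
    congr 1
    · simp
    · refine Finset.sum_congr rfl fun k _ => ?_
      rw [Finset.prod_filter, Fin.prod_univ_succ, Finset.prod_filter]
      simp only [Fin.succ_pos, if_true, Fin.succ_lt_succ_iff]
      ring

lemma seriesCost_swap_le {α : Type*} (c p : α → ℝ) {a b : α}
    (h : c a * (1 - p b) ≤ c b * (1 - p a)) (l : List α) :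
    seriesCost c p (a :: b :: l) ≤ seriesCost c p (b :: a :: l) := by
  simp only [seriesCost]
  linarith

lemma seriesCost_move_front_le {α : Type*} (c p : α → ℝ) (hp : ∀ i, 0 ≤ p i) (a : α)
    (u v : List α) (h : ∀ b ∈ u, c a * (1 - p b) ≤ c b * (1 - p a)) :
    seriesCost c p (a :: (u ++ v)) ≤ seriesCost c p (u ++ a :: v) := by
  induction u with
  | nil => exact le_rfl
  | cons b u ih =>
    calc seriesCost c p (a :: b :: (u ++ v))
        ≤ seriesCost c p (b :: a :: (u ++ v)) := seriesCost_swap_le c p (h b (by simp)) _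
      _ ≤ seriesCost c p (b :: (u ++ a :: v)) := by
        have := ih fun x hx => h x (List.mem_cons_of_mem _ hx)
        rw [seriesCost, seriesCost.eq_2 c p b (u ++ a :: v)]
        gcongr
        exact hp b

lemma seriesCost_le_of_perm {α : Type*} (c p : α → ℝ) (hp : ∀ i, 0 ≤ p i) {l l' : List α}
    (hl : l.Pairwise fun a b => c a * (1 - p b) ≤ c b * (1 - p a)) (hperm : l.Perm l') :
    seriesCost c p l ≤ seriesCost c p l' := by
  induction l generalizing l' with
  | nil => rw [hperm.nil_eq]
  | cons a t ih =>
    obtain ⟨hat, ht⟩ := List.pairwise_cons.1 hl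
    obtain ⟨u, v, rfl⟩ := List.append_of_mem (hperm.subset (List.mem_cons_self (a := a)))
    have hperm' : t.Perm (u ++ v) := (hperm.trans List.perm_middle).cons_inv
    calc seriesCost c p (a :: t)
        ≤ seriesCost c p (a :: (u ++ v)) := by
          have := ih ht hperm'
          rw [seriesCost, seriesCost]
          gcongr
          exact hp a
      _ ≤ seriesCost c p (u ++ a :: v) :=
          seriesCost_move_front_le c p hp a u v fun b hb =>
            hat b (hperm'.symm.subset (List.mem_append_left _ hb))

/-- Testing in nondecreasing order of `c i / q i` (with `q i = 1 - p i`) minimizes the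
expected cost of nonadaptively evaluating the series (AND) function. -/
theorem series_ratio_order_optimal {n : ℕ} (hn : 0 < n) (c p : Fin n → ℝ)
    (hc : ∀ i, 0 < c i) (hp : ∀ i, 0 < p i ∧ p i < 1) (π : Equiv.Perm (Fin n))
    (hπ : ∀ k k' : Fin n, k ≤ k' →
      c (π k) * (1 - p (π k')) ≤ c (π k') * (1 - p (π k))) :
    ∀ σ : Equiv.Perm (Fin n), ECand c p π ≤ ECand c p σ := by
  intro σ
  rw [ECand, ECand, sum_mul_prod_eq_seriesCost, sum_mul_prod_eq_seriesCost]
  refine seriesCost_le_of_perm c p (fun i => (hp i).1.le) ?_ ?_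
  · exact List.pairwise_ofFn.2 fun i j hij => hπ i j hij.le
  -- Both lists are duplicate-free and contain every index.
  · refine (List.perm_ext_iff_of_nodup (List.nodup_ofFn.2 π.injective)
      (List.nodup_ofFn.2 σ.injective)).2 fun a => ?_
    simp only [List.mem_ofFn, π.surjective a, σ.surjective a]
end

section
/- Let σ be a permutation of Fin n and let k be an index with k + 1 < n. Let σ' be the permutation obtained from σ by swapping the tests in positions k and k+1 (i.e., σ' = σ ∘ (swap k (k+1))). Then EC_∧(σ) − EC_∧(σ') = (Π_{j=0}^{k-1} p(σ j)) · (c(σ k) · q(σ (k+1)) − c(σ (k+1)) · q(σ k)). In particular, EC_∧(σ) ≤ EC_∧(σ') if and only if c(σ k) · q(σ (k+1)) ≤ c(σ (k+1)) · q(σ k). -/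
/-- The prefix product at position `i` is unchanged by an adjacent swap, unless `i` is the later
of the two swapped positions. The case `i = k` is included: neither position precedes `k`. -/
theorem prod_before_swap {n : ℕ} (f : Fin n → ℝ) (k l i : Fin n) (hl : (l : ℕ) = k + 1)
    (hi : i ≠ l) :
    ∏ j ∈ Finset.univ.filter (fun j => j < i), f (Equiv.swap k l j)
      = ∏ j ∈ Finset.univ.filter (fun j => j < i), f j := by
  refine Finset.prod_equiv (Equiv.swap k l) (fun j => ?_) (fun j _ => rfl)
  simp only [Finset.mem_filter, Finset.mem_univ, true_and, Fin.lt_def]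
  have hi' : (i : ℕ) ≠ l := fun h => hi (Fin.ext h)
  rcases eq_or_ne j k with rfl | hjk
  · rw [Equiv.swap_apply_left]; omega
  rcases eq_or_ne j l with rfl | hjl
  · rw [Equiv.swap_apply_right]; omega
  rw [Equiv.swap_apply_of_ne_of_ne hjk hjl]

theorem prod_before_succ {n : ℕ} (f : Fin n → ℝ) (k l : Fin n) (hl : (l : ℕ) = k + 1) :
    ∏ j ∈ Finset.univ.filter (fun j => j < l), f j
      = f k * ∏ j ∈ Finset.univ.filter (fun j => j < k), f j := by
  have h : Finset.univ.filter (fun j => j < l)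
      = insert k (Finset.univ.filter (fun j => j < k)) := by
    ext j
    simp only [Finset.mem_filter, Finset.mem_univ, true_and, Finset.mem_insert, Fin.lt_def,
      Fin.ext_iff]
    omega
  rw [h, Finset.prod_insert (by simp)]

/-- Exchange lemma for adjacent transpositions: swapping the tests in positions `k` and
`k+1` of the permutation `σ` changes the expected cost of the series (AND) strategy by
`(∏_{j<k} p (σ j)) · (c (σ k) · q (σ (k+1)) − c (σ (k+1)) · q (σ k))`; in particular
`EC_∧(σ) ≤ EC_∧(σ')` iff `c (σ k) · q (σ (k+1)) ≤ c (σ (k+1)) · q (σ k)`. -/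
theorem series_adjacent_swap {n : ℕ} (c p : Fin n → ℝ)
    (hc : ∀ i, 0 < c i) (hp : ∀ i, 0 < p i ∧ p i < 1)
    (σ : Equiv.Perm (Fin n)) (k : Fin n) (hk : (k : ℕ) + 1 < n) :
    ECand c p σ - ECand c p (σ * Equiv.swap k ⟨(k : ℕ) + 1, hk⟩)
        = (∏ j ∈ Finset.univ.filter (fun j => j < k), p (σ j)) *
          (c (σ k) * (1 - p (σ ⟨(k : ℕ) + 1, hk⟩))
            - c (σ ⟨(k : ℕ) + 1, hk⟩) * (1 - p (σ k))) ∧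
    (ECand c p σ ≤ ECand c p (σ * Equiv.swap k ⟨(k : ℕ) + 1, hk⟩) ↔
      c (σ k) * (1 - p (σ ⟨(k : ℕ) + 1, hk⟩))
        ≤ c (σ ⟨(k : ℕ) + 1, hk⟩) * (1 - p (σ k))) := by
  generalize hl' : (⟨(k : ℕ) + 1, hk⟩ : Fin n) = l
  have hl : (l : ℕ) = k + 1 := by rw [← hl']
  have hkl : k ≠ l := fun h => by rw [← h] at hl; omega
  have main : ECand c p σ - ECand c p (σ * Equiv.swap k l)
      = (∏ j ∈ Finset.univ.filter (fun j => j < k), p (σ j)) *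
          (c (σ k) * (1 - p (σ l)) - c (σ l) * (1 - p (σ k))) := by
    unfold ECand
    rw [← Finset.sum_sub_distrib, ← Finset.sum_subset (Finset.subset_univ {k, l}),
      Finset.sum_pair hkl]
    · simp only [Equiv.Perm.mul_apply, Equiv.swap_apply_left, Equiv.swap_apply_right]
      rw [prod_before_succ (fun j => p (σ j)) k l hl,
        prod_before_succ (fun j => p (σ (Equiv.swap k l j))) k l hl,
        prod_before_swap (fun j => p (σ j)) k l k hl hkl, Equiv.swap_apply_left]
      ring
    · intro i _ hi
      simp only [Finset.mem_insert, Finset.mem_singleton, not_or] at hi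
      simp only [Equiv.Perm.mul_apply]
      rw [prod_before_swap (fun j => p (σ j)) k l i hl hi.2,
        Equiv.swap_apply_of_ne_of_ne hi.1 hi.2, sub_self]
  have hP : 0 < ∏ j ∈ Finset.univ.filter (fun j => j < k), p (σ j) :=
    Finset.prod_pos fun j _ => (hp (σ j)).1
  refine ⟨main, ?_⟩
  rw [← sub_nonpos, main, ← sub_nonpos (b := c (σ l) * _)]
  exact ⟨fun h => nonpos_of_mul_nonpos_right h hP,
    fun h => mul_nonpos_of_nonneg_of_nonpos hP.le h⟩
end

section
/- Let π be a permutation of Fin n such that c(π k) · p(π k') ≤ c(π k') · p(π k) whenever k ≤ k' (i.e., the ratios c/p are nondecreasing along π). Then for every permutation σ of Fin n, EC_∨(π) ≤ EC_∨(σ), where EC_∨(ρ) = Σ_{k=0}^{n-1} c(ρ k) · Π_{j=0}^{k-1} q(ρ j). That is, testing in nondecreasing order of c_i/p_i minimizes the expected cost of nonadaptively evaluating the parallel function. -/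
/-!
The proof is an exchange argument carried out on lists. The expected cost of an order satisfies
the recursion `cost (a :: l) = c a + (1 - p a) * cost l`, and swapping two adjacent tests `b, a`
does not increase it when `c a * p b ≤ c b * p a`. Hence a test `a` of least ratio can be moved
to the front of any list without increasing the cost (`ParallelOrder.cost_move_front_le`).
Induction on the list sorted by ratio then shows that it is cheapest among its permutations
(`ParallelOrder.cost_le_of_perm`); at each step only comparisons with the current head are used,
so ties between ratios need no separate treatment.
-/

/-- Expected cost of the nonadaptive strategy testing in order `ρ` for the parallel (OR)
function: `EC_∨(ρ) = ∑_{k=0}^{n-1} c (ρ k) · ∏_{j<k} q (ρ j)` where `q i = 1 - p i`. -/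
noncomputable def ECor {n : ℕ} (c p : Fin n → ℝ) (ρ : Equiv.Perm (Fin n)) : ℝ :=
  ∑ k : Fin n, c (ρ k) * ∏ j ∈ Finset.univ.filter (fun j => j < k), (1 - p (ρ j))

namespace ParallelOrder

/-- Expected cost of performing the tests of a list in order, stopping at the first success. -/
noncomputable def cost {α : Type*} (c p : α → ℝ) : List α → ℝ
  | [] => 0
  | a :: l => c a + (1 - p a) * cost c p l

/-- Moving `a` to the front does not increase the cost if its ratio `c / p` is at most that of
every test it overtakes. -/
lemma cost_move_front_le {α : Type*} (c p : α → ℝ) (hp : ∀ i, p i < 1) (a : α) (t : List α) :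
    ∀ s : List α, (∀ b ∈ s, c a * p b ≤ c b * p a) →
      cost c p (a :: (s ++ t)) ≤ cost c p (s ++ a :: t)
  | [], _ => le_rfl
  | b :: s, h => by
    have ih := cost_move_front_le c p hp a t s fun x hx => h x (List.mem_cons_of_mem _ hx)
    have hb := h b List.mem_cons_self
    have hmul := mul_le_mul_of_nonneg_left ih (sub_nonneg.2 (hp b).le)
    simp only [List.cons_append, cost] at hmul ⊢
    linarith

lemma cost_le_of_perm {α : Type*} (c p : α → ℝ) (hp : ∀ i, p i < 1) :
    ∀ l l' : List α, l.Pairwise (fun a b => c a * p b ≤ c b * p a) → l.Perm l' →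
      cost c p l ≤ cost c p l'
  | [], l', _, h => by rw [List.nil_perm.1 h]
  | a :: l, l', hl, h => by
    obtain ⟨s, t, rfl⟩ := List.append_of_mem (h.subset List.mem_cons_self)
    have hperm : l.Perm (s ++ t) := (h.trans List.perm_middle).cons_inv
    obtain ⟨ha, hl⟩ := List.pairwise_cons.1 hl
    have ih := cost_le_of_perm c p hp l (s ++ t) hl hperm
    have hfront := cost_move_front_le c p hp a t s fun b hb =>
      ha b (hperm.symm.subset (List.mem_append_left t hb))
    refine le_trans ?_ hfront
    simp only [cost]
    linarith [mul_le_mul_of_nonneg_left ih (sub_nonneg.2 (hp a).le)]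

/-- The closed formula for the expected cost, for an arbitrary finite sequence of tests. -/
lemma cost_ofFn {α : Type*} (c p : α → ℝ) : ∀ (m : ℕ) (f : Fin m → α),
    cost c p (List.ofFn f) =
      ∑ k : Fin m, c (f k) * ∏ j ∈ Finset.univ.filter (fun j => j < k), (1 - p (f j))
  | 0, f => by simp [cost]
  | m + 1, f => by
    rw [List.ofFn_succ, cost, cost_ofFn c p m, Fin.sum_univ_succ]
    simp only [Finset.prod_filter, Fin.prod_univ_succ, Fin.succ_lt_succ_iff, Fin.succ_pos,
      Fin.not_lt_zero, if_true, if_false, Finset.prod_const_one, mul_one, Finset.mul_sum]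
    congr 1
    exact Finset.sum_congr rfl fun k _ => by ring

end ParallelOrder

/-- Testing in nondecreasing order of `c i / p i` minimizes the expected cost of
nonadaptively evaluating the parallel (OR) function. -/
theorem parallel_ratio_order_optimal {n : ℕ} (hn : 0 < n) (c p : Fin n → ℝ)
    (hc : ∀ i, 0 < c i) (hp : ∀ i, 0 < p i ∧ p i < 1) (π : Equiv.Perm (Fin n))
    (hπ : ∀ k k' : Fin n, k ≤ k' →
      c (π k) * p (π k') ≤ c (π k') * p (π k)) :
    ∀ σ : Equiv.Perm (Fin n), ECor c p π ≤ ECor c p σ := by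
  intro σ
  have hEC (ρ : Equiv.Perm (Fin n)) : ECor c p ρ = ParallelOrder.cost c p (List.ofFn ρ) :=
    (ParallelOrder.cost_ofFn c p n ρ).symm
  rw [hEC, hEC]
  refine ParallelOrder.cost_le_of_perm c p (fun i => (hp i).2) _ _ ?_ ?_
  · exact List.pairwise_ofFn.2 fun i j hij => hπ i j hij.le
  · refine (List.perm_ext_iff_of_nodup (List.nodup_ofFn.2 π.injective)
      (List.nodup_ofFn.2 σ.injective)).2 fun a => ?_
    simp only [List.mem_ofFn]
    exact iff_of_true (π.surjective a) (σ.surjective a)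
end

section
/- Adaptivity does not help for the series function: let T be any binary decision tree over variables Fin n in which no variable is queried twice along any root-to-leaf path, and which correctly computes the series (AND) function f(x) = ⋀_i x i. Define the expected cost of a tree recursively by EC(leaf) = 0 and EC(node i T₀ T₁) = c i + q i · EC(T₀) + p i · EC(T₁). Then EC(T) ≥ Σ_{k=0}^{n-1} c(π k) · Π_{j=0}^{k-1} p(π j) for any permutation π of Fin n with c(π k) · q(π k') ≤ c(π k') · q(π k) whenever k ≤ k' (i.e., π sorts the variables by nondecreasing c_i/q_i). -/
/-!
Along the all-true path (the spine) a tree computing AND must query every variable: if `i` were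
missed, flipping `x i` would not change the answer. Discarding the cost of all false-subtrees, the
expected cost is therefore at least that of querying the variables in spine order. Write
`F(S) = ∑_{k ∈ S} c k · ∏_{j ∈ S, j < k} p j` for the cost of testing `S` in sorted order. The key
inequality is `F(S ∪ {i}) ≤ c i + p i · F(S)` for `i ∉ S`: moving `i` to its sorted position does
not increase the cost. The difference of the two sides is
`c i · (1 - ∏_{j < i} p j) - q i · ∑_{j < i} c j · ∏_{l < j} p l`, which is nonnegative because
`q i · c j ≤ c i · q j` for `j < i` and `∑_{j < i} q j · ∏_{l < j} p l` telescopes to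
`1 - ∏_{j < i} p j`. Induction along the spine gives `F(univ) ≤ EC(T)`.
-/

/-- Binary decision trees over variables `Fin n`: a leaf carries a Boolean label, and an
internal node carries a variable index together with a false-subtree and a true-subtree. -/
inductive BDT (n : ℕ) where
  | leaf (b : Bool)
  | node (i : Fin n) (t0 t1 : BDT n)

/-- The label of the leaf reached by following the tree on input `x` (descending into the
true-subtree at a node querying `i` when `x i = true`, into the false-subtree otherwise). -/
def BDT.follow {n : ℕ} : BDT n → (Fin n → Bool) → Bool
  | .leaf b, _ => b
  | .node i t0 t1, x => if x i then t1.follow x else t0.follow x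

/-- The set of variables appearing in a binary decision tree. -/
def BDT.vars {n : ℕ} : BDT n → Finset (Fin n)
  | .leaf _ => ∅
  | .node i t0 t1 => insert i (t0.vars ∪ t1.vars)

/-- No variable is queried twice along any root-to-leaf path of the tree. -/
def BDT.noRepeats {n : ℕ} : BDT n → Prop
  | .leaf _ => True
  | .node i t0 t1 => i ∉ t0.vars ∧ i ∉ t1.vars ∧ t0.noRepeats ∧ t1.noRepeats

/-- Expected cost of a binary decision tree:
`EC(leaf) = 0`, `EC(node i T₀ T₁) = c i + q i · EC(T₀) + p i · EC(T₁)` with `q i = 1 - p i`. -/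
noncomputable def BDT.expCost {n : ℕ} (c p : Fin n → ℝ) : BDT n → ℝ
  | .leaf _ => 0
  | .node i t0 t1 => c i + (1 - p i) * (t0.expCost c p) + p i * (t1.expCost c p)

/-- Expected cost of testing the elements of `S` in increasing order until the first failure. -/
noncomputable def sortedCost {n : ℕ} (c p : Fin n → ℝ) (S : Finset (Fin n)) : ℝ :=
  ∑ k ∈ S, c k * ∏ j ∈ S with j < k, p j

/-- The positions, in the order given by `π`, of the variables queried on the all-true path. -/
def BDT.spine {n : ℕ} (π : Equiv.Perm (Fin n)) : BDT n → Finset (Fin n)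
  | .leaf _ => ∅
  | .node i _ t1 => insert (π.symm i) (t1.spine π)

theorem BDT.mem_vars_of_mem_spine {n : ℕ} (π : Equiv.Perm (Fin n)) (T : BDT n) {k : Fin n}
    (hk : k ∈ T.spine π) : π k ∈ T.vars := by
  induction T with
  | leaf b => simp [BDT.spine] at hk
  | node i t0 t1 ih0 ih1 =>
    simp only [BDT.spine, Finset.mem_insert] at hk
    rcases hk with rfl | hk
    · simp [BDT.vars]
    · simp [BDT.vars, ih1 hk]

/-- A variable off the spine can be set to false without changing the answer on the all-true
input. -/
theorem BDT.follow_update_of_notMem_spine {n : ℕ} (π : Equiv.Perm (Fin n)) (T : BDT n)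
    {k : Fin n} (hk : k ∉ T.spine π) :
    T.follow (Function.update (fun _ => true) (π k) false) = T.follow (fun _ => true) := by
  induction T with
  | leaf b => rfl
  | node i t0 t1 ih0 ih1 =>
    simp only [BDT.spine, Finset.mem_insert, not_or] at hk
    have hne : i ≠ π k := fun h => hk.1 (by simp [h])
    simp [BDT.follow, Function.update_of_ne hne, ih1 hk.2]

theorem BDT.expCost_nonneg {n : ℕ} (c p : Fin n → ℝ) (hc : ∀ i, 0 < c i)
    (hp : ∀ i, 0 < p i ∧ p i < 1) (T : BDT n) : 0 ≤ T.expCost c p := by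
  induction T with
  | leaf b => exact le_rfl
  | node i t0 t1 ih0 ih1 =>
    have h0 := mul_nonneg (sub_nonneg.2 (hp i).2.le) ih0
    have h1 := mul_nonneg (hp i).1.le ih1
    have := hc i
    simp only [BDT.expCost]
    linarith

/-- Testing `i` first and then `S` in sorted order costs at least as much as testing
`insert i S` in sorted order. -/
theorem sortedCost_insert_le {n : ℕ} (c p : Fin n → ℝ) (hp : ∀ i, 0 < p i ∧ p i < 1)
    (hs : ∀ k k' : Fin n, k ≤ k' → c k * (1 - p k') ≤ c k' * (1 - p k))
    (S : Finset (Fin n)) (i : Fin n) (hi : i ∉ S) :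
    sortedCost c p (insert i S) ≤ c i + p i * sortedCost c p S := by
  have hfi : ((insert i S).filter (· < i)) = S.filter (· < i) := by
    simp [Finset.filter_insert]
  -- Elements before `i` keep their weight; elements after `i` gain a factor `p i`.
  have hterm : ∀ k ∈ S, c k * ∏ j ∈ insert i S with j < k, p j =
      p i * (c k * ∏ j ∈ S with j < k, p j) +
        if k < i then (1 - p i) * (c k * ∏ j ∈ S with j < k, p j) else 0 := by
    intro k hk
    have hne : k ≠ i := fun h => hi (h ▸ hk)
    rw [Finset.filter_insert]
    by_cases h : i < k
    · rw [if_pos h, if_neg h.not_gt, Finset.prod_insert (by simp [hi])]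
      ring
    · rw [if_neg h, if_pos (lt_of_le_of_ne (not_lt.1 h) hne)]
      ring
  have hexp : sortedCost c p (insert i S) = c i * ∏ j ∈ S with j < i, p j +
      (p i * sortedCost c p S +
        ∑ k ∈ S with k < i, (1 - p i) * (c k * ∏ j ∈ S with j < k, p j)) := by
    unfold sortedCost
    rw [Finset.sum_insert hi, hfi, Finset.sum_congr rfl hterm, Finset.sum_add_distrib,
      Finset.mul_sum, Finset.sum_filter]
  have hbound : ∑ k ∈ S with k < i, (1 - p i) * (c k * ∏ j ∈ S with j < k, p j) ≤
      ∑ k ∈ S with k < i, c i * ((1 - p k) * ∏ j ∈ S with j < k, p j) := by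
    refine Finset.sum_le_sum fun k hk => ?_
    have hP : 0 ≤ ∏ j ∈ S with j < k, p j := Finset.prod_nonneg fun j _ => (hp j).1.le
    have := mul_le_mul_of_nonneg_right (hs k i (Finset.mem_filter.1 hk).2.le) hP
    linarith
  have htel : ∏ j ∈ S with j < i, p j =
      1 - ∑ k ∈ S with k < i, (1 - p k) * ∏ j ∈ S with j < k, p j := by
    have h := Finset.prod_one_sub_ordered (S.filter (· < i)) (fun k => 1 - p k)
    simp only [sub_sub_cancel] at h
    rw [h]
    congr 1
    refine Finset.sum_congr rfl fun k hk => ?_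
    have hki := (Finset.mem_filter.1 hk).2
    congr 1
    refine Finset.prod_congr ?_ fun _ _ => rfl
    ext j
    simp only [Finset.mem_filter]
    exact ⟨fun h => ⟨h.1.1, h.2⟩, fun h => ⟨⟨h.1, h.2.trans hki⟩, h.2⟩⟩
  rw [← Finset.mul_sum _ _ (c i)] at hbound
  rw [hexp, htel]
  linarith

theorem sortedCost_spine_le {n : ℕ} (c p : Fin n → ℝ) (hc : ∀ i, 0 < c i)
    (hp : ∀ i, 0 < p i ∧ p i < 1) (π : Equiv.Perm (Fin n))
    (hπ : ∀ k k' : Fin n, k ≤ k' →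
      c (π k) * (1 - p (π k')) ≤ c (π k') * (1 - p (π k)))
    (T : BDT n) (hrep : T.noRepeats) :
    sortedCost (c ∘ π) (p ∘ π) (T.spine π) ≤ T.expCost c p := by
  induction T with
  | leaf b => simp [BDT.spine, sortedCost, BDT.expCost]
  | node i t0 t1 ih0 ih1 =>
    obtain ⟨-, hi, -, hrep1⟩ := hrep
    have hi' : π.symm i ∉ t1.spine π := fun h =>
      hi (by simpa using BDT.mem_vars_of_mem_spine π t1 h)
    have h := sortedCost_insert_le (c ∘ π) (p ∘ π) (fun k => hp (π k)) hπ _ _ hi'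
    simp only [Function.comp_apply, Equiv.apply_symm_apply] at h
    have h0 := mul_nonneg (sub_nonneg.2 (hp i).2.le) (BDT.expCost_nonneg c p hc hp t0)
    have h1 := mul_le_mul_of_nonneg_left (ih1 hrep1) (hp i).1.le
    simp only [BDT.spine, BDT.expCost]
    linarith

/-- Adaptivity does not help for the series (AND) function: the expected cost of any
binary decision tree that computes the AND function without repeated queries along any
path is at least the expected cost of the nonadaptive strategy testing in nondecreasing
order of `c i / q i`. -/
theorem series_adaptivity_does_not_help {n : ℕ} (hn : 0 < n) (c p : Fin n → ℝ)
    (hc : ∀ i, 0 < c i) (hp : ∀ i, 0 < p i ∧ p i < 1)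
    (T : BDT n) (hrep : T.noRepeats)
    (hT : ∀ x : Fin n → Bool, (T.follow x = true ↔ ∀ i, x i = true))
    (π : Equiv.Perm (Fin n))
    (hπ : ∀ k k' : Fin n, k ≤ k' →
      c (π k) * (1 - p (π k')) ≤ c (π k') * (1 - p (π k))) :
    ECand c p π ≤ T.expCost c p := by
  have hspine : T.spine π = Finset.univ := by
    refine Finset.eq_univ_iff_forall.2 fun k => ?_
    by_contra hk
    have h := BDT.follow_update_of_notMem_spine π T hk
    rw [(hT fun _ => true).2 fun _ => rfl] at h
    simpa using (hT _).1 h (π k)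
  have h := sortedCost_spine_le c p hc hp π hπ T hrep
  rw [hspine] at h
  exact h
end
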